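/- arXiv:2202.04722 — 2 statements merged into one kernel-verified Lean document; each statement's English description precedes it below -/
import Mathlib

section
/- Let N be a positive integer, 0 ≤ α < 1/4, and let F̃ be the NUDFT matrix associated with a set of α-perturbed nodes. Then F̃ is invertible and ‖F̃^{−1}‖₂ ≤ 1/((1−φ_α)√(2N+1)), where φ_α = 1 − cos(πα) + sin(πα) and ‖·‖₂ denotes the spectral norm. -/
open Real Finset

/-- The Fourier coefficients of `cos (a t)` on `[-π, π]`. -/
theorem integral_exp_mul_cos {a : ℝ} {n : ℤ} (hp : a + n ≠ 0) (hm : a - n ≠ 0) :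
    ∫ t in (-π)..π, Complex.exp (-(n * t) * Complex.I) * Complex.cos (a * t) =
      ((2 * a * sin (π * a) * cos (n * π) / (a ^ 2 - n ^ 2) : ℝ) : ℂ) := by
  have key : ∀ b : ℝ, b ≠ 0 → ∫ t in (-π)..π, Complex.exp (b * Complex.I * t) =
      ((2 * sin (b * π) / b : ℝ) : ℂ) := by
    intro b hb
    have hbc : (b : ℂ) ≠ 0 := by exact_mod_cast hb
    rw [integral_exp_mul_complex (mul_ne_zero hbc Complex.I_ne_zero)]
    push_cast
    rw [Complex.sin]
    have h1 : (b : ℂ) * Complex.I * π = b * π * Complex.I := by ring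
    have h2 : (b : ℂ) * Complex.I * (-π) = -(b * π) * Complex.I := by ring
    rw [h1, h2]
    field_simp
    rw [Complex.I_sq]
    ring
  have split : ∀ t : ℝ, Complex.exp (-(n * t) * Complex.I) * Complex.cos (a * t) =
      (1 / 2) * Complex.exp ((a - n : ℝ) * Complex.I * t) +
        (1 / 2) * Complex.exp ((-(a + n) : ℝ) * Complex.I * t) := by
    intro t
    rw [Complex.cos, mul_div_assoc', mul_add, ← Complex.exp_add, ← Complex.exp_add, add_div]
    push_cast
    ring_nf
  simp_rw [split]
  rw [intervalIntegral.integral_add, intervalIntegral.integral_const_mul,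
    intervalIntegral.integral_const_mul, key _ hm, key _ (neg_ne_zero.mpr hp)]
  · have hs : sin (n * π) = 0 := sin_int_mul_pi n
    have e1 : sin ((a - n) * π) = sin (π * a) * cos (n * π) := by
      rw [sub_mul, sin_sub, hs, mul_comm a]; ring
    have e2 : sin (-(a + n) * π) = -(sin (π * a) * cos (n * π)) := by
      rw [neg_mul, sin_neg, add_mul, sin_add, hs, mul_comm a]; ring
    rw [e1, e2]
    have hd : a ^ 2 - n ^ 2 ≠ 0 := by
      rw [sq_sub_sq]; exact mul_ne_zero hp hm
    have : (2 * a * sin (π * a) * cos (n * π) / (a ^ 2 - n ^ 2) : ℝ) =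
        (1 / 2) * (2 * (sin (π * a) * cos (n * π)) / (a - n)) +
        (1 / 2) * (2 * -(sin (π * a) * cos (n * π)) / (-(a + n))) := by
      field_simp
      ring
    rw [this]
    push_cast
    ring
  · exact Continuous.intervalIntegrable (by fun_prop) _ _
  · exact Continuous.intervalIntegrable (by fun_prop) _ _

theorem hasSum_int_cos_mul {a : ℝ} (ha0 : a ≠ 0) (ha : |a| < 1) {t : ℝ} (ht : |t| ≤ π) :
    HasSum (fun n : ℤ ↦ ((a * sin (π * a) * cos (n * π) / (π * (a ^ 2 - n ^ 2)) : ℝ) : ℂ) *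
      Complex.exp (n * t * Complex.I)) (Complex.cos (a * t)) := by
  have : Fact (0 < 2 * π) := ⟨two_pi_pos⟩
  let g : ℝ → ℂ := fun t ↦ Complex.cos (a * t)
  have hlt : ∀ n : ℤ, n ≠ 0 → |a| < |(n : ℝ)| := fun n hn ↦
    ha.trans_le (by exact_mod_cast Int.one_le_abs hn)
  have hne : ∀ n : ℤ, a + n ≠ 0 ∧ a - n ≠ 0 := by
    intro n
    rcases eq_or_ne n 0 with rfl | hn
    · simpa using ha0
    · have := hlt n hn
      refine ⟨fun h ↦ this.ne ?_, fun h ↦ this.ne ?_⟩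
      · rw [eq_neg_of_add_eq_zero_left h, abs_neg]
      · rw [sub_eq_zero.mp h]
  have hper : g (-π) = g (-π + 2 * π) := by
    have : -π + 2 * π = π := by ring
    rw [this]; simp [g]
  let f : C(AddCircle (2 * π), ℂ) := ⟨AddCircle.liftIco (2 * π) (-π) g,
    AddCircle.liftIco_continuous hper (by fun_prop)⟩
  have hcoef : ∀ n : ℤ, fourierCoeff f n =
      ((a * sin (π * a) * cos (n * π) / (π * (a ^ 2 - n ^ 2)) : ℝ) : ℂ) := by
    intro n
    change fourierCoeff (AddCircle.liftIco (2 * π) (-π) g) n = _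
    rw [fourierCoeff_liftIco_eq, fourierCoeffOn_eq_integral]
    have h1 : -π + 2 * π = π := by ring
    have h2 : -π + 2 * π - -π = 2 * π := by ring
    have h3 : ∀ x : ℝ, fourier (-n) (x : AddCircle (-π + 2 * π - -π)) • g x =
        Complex.exp (-(n * x) * Complex.I) * Complex.cos (a * x) := by
      intro x
      rw [fourier_coe_apply, h2, smul_eq_mul]
      congr 2
      push_cast
      have : (π : ℂ) ≠ 0 := by exact_mod_cast pi_ne_zero
      field_simp
    simp_rw [h3]
    rw [h2, h1, integral_exp_mul_cos (hne n).1 (hne n).2, ← Complex.coe_smul, smul_eq_mul,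
      ← Complex.ofReal_mul]
    congr 1
    have hd : a ^ 2 - n ^ 2 ≠ 0 := by
      rw [sq_sub_sq]; exact mul_ne_zero (hne n).1 (hne n).2
    field_simp
  have hsum : Summable (fourierCoeff f) := by
    have hpos : 0 < 1 - a ^ 2 := by
      have := (sq_lt_one_iff_abs_lt_one a).mpr ha
      linarith
    refine Summable.of_norm_bounded_eventually
      (g := fun n : ℤ ↦ (1 / (π * (1 - a ^ 2))) * (1 / (n : ℝ) ^ 2))
      ((summable_one_div_int_pow.mpr one_lt_two).mul_left _) ?_
    have : {(0 : ℤ)}ᶜ ∈ Filter.cofinite := (Set.finite_singleton 0).compl_mem_cofinite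
    filter_upwards [this] with n hn
    have hn0 : n ≠ 0 := by simpa using hn
    have hn1 : (1 : ℝ) ≤ (n : ℝ) ^ 2 := by
      rw [← sq_abs]
      exact one_le_pow₀ (by exact_mod_cast Int.one_le_abs hn0)
    rw [hcoef, Complex.norm_real, norm_eq_abs, abs_div, abs_mul, abs_mul, abs_mul, abs_of_pos pi_pos]
    have hd : (1 - a ^ 2) * (n : ℝ) ^ 2 ≤ |a ^ 2 - n ^ 2| := by
      rw [abs_sub_comm]
      refine le_trans ?_ (le_abs_self _)
      nlinarith [sq_nonneg a]
    have hnum : |a| * |sin (π * a)| * |cos (n * π)| ≤ 1 :=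
      mul_le_one₀ (mul_le_one₀ ha.le (abs_nonneg _) (abs_sin_le_one _)) (abs_nonneg _)
        (abs_cos_le_one _)
    calc _ ≤ 1 / (π * ((1 - a ^ 2) * (n : ℝ) ^ 2)) := by
          gcongr
      _ = _ := by field_simp
  have hval : f (t : AddCircle (2 * π)) = Complex.cos (a * t) := by
    change AddCircle.liftIco (2 * π) (-π) g t = g t
    rcases lt_or_eq_of_le (abs_le.mp ht).2 with h | h
    · exact AddCircle.liftIco_coe_apply ⟨(abs_le.mp ht).1, by linarith⟩
    · have h1 : ((-π : ℝ) : AddCircle (2 * π)) = (t : AddCircle (2 * π)) := by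
        rw [h, ← AddCircle.coe_add_period (2 * π) (-π)]
        congr 1; ring
      rw [← h1, AddCircle.liftIco_coe_apply ⟨le_rfl, by linarith [pi_pos]⟩, h]
      simp [g]
  have := has_pointwise_sum_fourier_series_of_summable hsum (t : AddCircle (2 * π))
  rw [hval] at this
  refine this.congr_fun fun n ↦ ?_
  rw [hcoef, fourier_coe_apply, smul_eq_mul]
  congr 2
  push_cast
  have : (π : ℂ) ≠ 0 := by exact_mod_cast pi_ne_zero
  field_simp

/-- The Fourier cosine series of `cos (a t)` on `[-π, π]`. -/
theorem hasSum_cos_mul {a : ℝ} (ha : |a| < 1) {t : ℝ} (ht : |t| ≤ π) :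
    HasSum (fun m : ℕ ↦ (-1) ^ m * (2 * a * sin (π * a) / (π * ((m + 1) ^ 2 - a ^ 2))) *
      cos ((m + 1) * t)) (cos (a * t) - sinc (π * a)) := by
  rcases eq_or_ne a 0 with rfl | ha0
  · simp
  have h := (hasSum_int_cos_mul ha0 ha ht).nat_add_neg
  rw [← hasSum_nat_add_iff' 1] at h
  rw [← Complex.hasSum_ofReal]
  convert! h using 1
  · ext m
    have hc : cos ((m + 1) * π) = (-1) ^ (m + 1) := by
      exact_mod_cast cos_nat_mul_pi (m + 1)
    push_cast
    have hc' : Complex.cos ((m + 1) * π) = (-1) ^ (m + 1) := by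
      exact_mod_cast congrArg (fun x : ℝ ↦ (x : ℂ)) hc
    have hd : ((m : ℝ) + 1) ^ 2 - a ^ 2 ≠ 0 := by
      have := (sq_lt_one_iff_abs_lt_one a).mpr ha
      have : (0 : ℝ) ≤ m := m.cast_nonneg
      nlinarith
    have hd' : ((m : ℂ) + 1) ^ 2 - a ^ 2 ≠ 0 := by exact_mod_cast hd
    have hpi : (π : ℂ) ≠ 0 := by exact_mod_cast pi_ne_zero
    have e1 : (-((m : ℂ) + 1)) * π = -((m + 1) * π) := by ring
    have e2 : (a : ℂ) ^ 2 - (m + 1) ^ 2 = -((m + 1) ^ 2 - a ^ 2) := by ring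
    rw [e1, neg_sq, Complex.cos_neg, hc', e2, Complex.cos, pow_succ, neg_mul ((m : ℂ) + 1) (t : ℂ)]
    field_simp
    ring
  · have hpi : (π : ℂ) ≠ 0 := by exact_mod_cast pi_ne_zero
    have hac : (a : ℂ) ≠ 0 := by exact_mod_cast ha0
    rw [sinc_of_ne_zero (mul_ne_zero pi_ne_zero ha0)]
    simp
    field_simp

/-- The expansion of `sin (δ t)` on `[-π, π]` in the half-integer modes `sin ((m + 1/2) t)`. -/
theorem hasSum_sin_mul {δ : ℝ} (hδ : |δ| < 1 / 2) {t : ℝ} (ht : |t| ≤ π) :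
    HasSum (fun m : ℕ ↦ (-1) ^ m * (2 * δ * cos (π * δ) / (π * ((m + 1 / 2) ^ 2 - δ ^ 2))) *
      sin ((m + 1 / 2) * t)) (sin (δ * t)) := by
  rcases eq_or_ne δ 0 with rfl | hδ0
  · simp
  obtain ⟨ht1, ht2⟩ := abs_le.mp ht
  obtain ⟨hδ1, hδ2⟩ := abs_lt.mp hδ
  have hs : sin (π * δ) ≠ 0 := by
    refine sin_ne_zero_iff.mpr fun n hn ↦ ?_
    rw [mul_comm, mul_right_inj' pi_ne_zero] at hn
    have h1 : (-1 : ℝ) < n := by linarith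
    have h2 : (n : ℝ) < 1 := by linarith
    have h3 : n = 0 := by
      have h1' : (-1 : ℤ) < n := by exact_mod_cast h1
      have h2' : n < 1 := by exact_mod_cast h2
      omega
    exact hδ0 (by rw [← hn, h3, Int.cast_zero])
  have ha : |2 * δ| < 1 := by rw [abs_lt]; constructor <;> linarith
  have h := (hasSum_cos_mul ha (t := (π + t) / 2) (by rw [abs_le]; constructor <;> linarith)).sub
    (hasSum_cos_mul ha (t := (π - t) / 2) (by rw [abs_le]; constructor <;> linarith))
  have h := h.div_const (-2 * sin (π * δ))
  have hinj : Function.Injective (fun m : ℕ ↦ 2 * m) := fun a b h ↦ by simpa using h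
  have hcos : ∀ m : ℕ, cos ((m + 1) * ((π + t) / 2)) =
      (-1) ^ (m + 1) * cos ((m + 1) * ((π - t) / 2)) := by
    intro m
    have e : ((m : ℝ) + 1) * ((π + t) / 2) = ((m + 1 : ℕ) : ℝ) * π - (m + 1) * ((π - t) / 2) := by
      push_cast; ring
    rw [e, cos_nat_mul_pi_sub]
  rw [← hinj.hasSum_iff] at h
  · convert! h using 1
    · ext m
      have hd : ((m : ℝ) + 1 / 2) ^ 2 - δ ^ 2 ≠ 0 := by
        have : (0 : ℝ) ≤ m := m.cast_nonneg
        nlinarith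
      have e3 : cos ((2 * (m : ℝ) + 1) * ((π - t) / 2)) = (-1) ^ m * sin ((m + 1 / 2) * t) := by
        have e : (2 * (m : ℝ) + 1) * ((π - t) / 2) = m * π + (π / 2 - (m + 1 / 2) * t) := by ring
        rw [e, add_comm, cos_add_nat_mul_pi, cos_pi_div_two_sub]
      have e4 : sin (π * (2 * δ)) = 2 * sin (π * δ) * cos (π * δ) := by
        rw [← sin_two_mul]; ring_nf
      have hc := hcos (2 * m)
      simp only [Function.comp_apply]
      rw [hc, e4]
      push_cast
      have e6 : (-1 : ℝ) ^ (2 * m) = 1 := by rw [pow_mul, neg_one_sq, one_pow]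
      rw [e3, pow_succ (-1 : ℝ) (2 * m), e6]
      have e5 : (2 * (m : ℝ) + 1) ^ 2 - (2 * δ) ^ 2 = 4 * ((m + 1 / 2) ^ 2 - δ ^ 2) := by ring
      rw [e5]
      generalize ((m : ℝ) + 1 / 2) ^ 2 - δ ^ 2 = D at hd ⊢
      generalize sin (π * δ) = S at hs ⊢
      field_simp
      ring
    · rw [eq_div_iff (by simpa using hs)]
      have e1 : 2 * δ * ((π + t) / 2) = δ * π + δ * t := by ring
      have e2 : 2 * δ * ((π - t) / 2) = δ * π - δ * t := by ring
      rw [e1, e2, cos_add, cos_sub, mul_comm δ π]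
      ring
  · intro m hm
    have hodd : Odd m := by
      rw [← Nat.not_even_iff_odd]
      rintro ⟨k, hk⟩
      exact hm ⟨k, by simp only; omega⟩
    rw [hcos, hodd.add_one.neg_one_pow]
    simp

theorem sinc_antitoneOn : AntitoneOn sinc (Set.Icc 0 π) := by
  intro x hx y hy hxy
  rcases eq_or_lt_of_le hx.1 with h0 | h0
  · rw [← h0, sinc_zero]; exact sinc_le_one y
  rw [sinc_of_ne_zero h0.ne', sinc_of_ne_zero (h0.trans_le hxy).ne']
  rcases eq_or_lt_of_le hxy with rfl | hlt
  · rfl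
  have := strictConcaveOn_sin_Icc.concaveOn.slope_anti_adjacent (x := 0) (y := x) (z := y)
    ⟨le_rfl, pi_pos.le⟩ hy h0 hlt
  rw [sin_zero, sub_zero, sub_zero, div_le_div_iff₀ (sub_pos.mpr hlt) h0] at this
  rw [div_le_div_iff₀ (h0.trans hlt) h0]
  linarith

theorem monotoneOn_mul_cos : MonotoneOn (fun x ↦ x * cos x) (Set.Icc 0 (π / 4)) := by
  refine monotoneOn_of_deriv_nonneg (convex_Icc _ _) (by fun_prop) (by fun_prop) fun x hx ↦ ?_
  rw [interior_Icc] at hx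
  have hd : HasDerivAt (fun x ↦ x * cos x) (1 * cos x + x * -sin x) x :=
    (hasDerivAt_id x).mul (hasDerivAt_cos x)
  rw [hd.deriv]
  have hs : sin x ≤ cos x := by
    rw [← sin_pi_div_two_sub]
    exact sin_le_sin_of_le_of_le_pi_div_two (by linarith [hx.1, pi_pos]) (by linarith [hx.1])
      (by linarith [hx.2])
  have hs0 : 0 ≤ sin x := sin_nonneg_of_nonneg_of_le_pi hx.1.le (by linarith [hx.2, pi_pos])
  nlinarith [hx.1, hx.2, pi_lt_four]

theorem abs_sinc_sub_one_le {α δ : ℝ} (hα : α < 1 / 4) (hδ : |δ| ≤ α) :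
    |sinc (π * δ) - 1| ≤ 1 - sinc (π * α) := by
  have hα0 : 0 ≤ α := (abs_nonneg δ).trans hδ
  rw [abs_sub_comm, abs_of_nonneg (sub_nonneg.mpr (sinc_le_one _))]
  have h1 : sinc (π * δ) = sinc (π * |δ|) := by
    rcases abs_choice δ with h | h <;> rw [h]
    rw [mul_neg, sinc_neg]
  rw [h1]
  have := pi_pos
  have h2 := sinc_antitoneOn (a := π * |δ|) (b := π * α) ⟨by positivity, by nlinarith⟩
    ⟨by positivity, by nlinarith⟩ (by gcongr)
  linarith

theorem abs_cosCoeff_le {α δ : ℝ} (hα : α < 1 / 4) (hδ : |δ| ≤ α) (m : ℕ) :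
    |2 * δ * sin (π * δ) / (π * ((m + 1) ^ 2 - δ ^ 2))| ≤
      2 * α * sin (π * α) / (π * ((m + 1) ^ 2 - α ^ 2)) := by
  have hα0 : 0 ≤ α := (abs_nonneg δ).trans hδ
  have hm : (0 : ℝ) ≤ m := m.cast_nonneg
  have hpi := pi_pos
  have hsq : δ ^ 2 ≤ α ^ 2 := sq_le_sq' (abs_le.mp hδ).1 (abs_le.mp hδ).2
  have hsin : |sin (π * δ)| = sin (π * |δ|) := by
    rw [abs_sin_eq_sin_abs_of_abs_le_pi, abs_mul, abs_of_pos hpi]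
    rw [abs_mul, abs_of_pos hpi]; nlinarith
  have hD : 0 < ((m : ℝ) + 1) ^ 2 - α ^ 2 := by nlinarith
  have hmono : sin (π * |δ|) ≤ sin (π * α) :=
    sin_le_sin_of_le_of_le_pi_div_two (by nlinarith [abs_nonneg δ]) (by nlinarith) (by gcongr)
  have hs0 : 0 ≤ sin (π * |δ|) :=
    sin_nonneg_of_nonneg_of_le_pi (by positivity) (by nlinarith)
  rw [abs_div, abs_mul, abs_mul, abs_mul, abs_two, abs_of_pos hpi, hsin,
    abs_of_pos (show 0 < ((m : ℝ) + 1) ^ 2 - δ ^ 2 by linarith)]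
  gcongr
  exact mul_nonneg (by positivity) (hs0.trans hmono)

theorem abs_sinCoeff_le {α δ : ℝ} (hα : α < 1 / 4) (hδ : |δ| ≤ α) (m : ℕ) :
    |2 * δ * cos (π * δ) / (π * ((m + 1 / 2) ^ 2 - δ ^ 2))| ≤
      2 * α * cos (π * α) / (π * ((m + 1 / 2) ^ 2 - α ^ 2)) := by
  have hα0 : 0 ≤ α := (abs_nonneg δ).trans hδ
  have hm : (0 : ℝ) ≤ m := m.cast_nonneg
  have hpi := pi_pos
  have hsq : δ ^ 2 ≤ α ^ 2 := sq_le_sq' (abs_le.mp hδ).1 (abs_le.mp hδ).2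
  have hcos : |cos (π * δ)| = cos (π * |δ|) := by
    rw [← cos_abs (π * δ), abs_mul, abs_of_pos hpi, abs_of_nonneg]
    exact cos_nonneg_of_neg_pi_div_two_le_of_le (by nlinarith [abs_nonneg δ]) (by nlinarith)
  have hD : 0 < ((m : ℝ) + 1 / 2) ^ 2 - α ^ 2 := by nlinarith
  have hmono : |δ| * cos (π * |δ|) ≤ α * cos (π * α) := by
    have := monotoneOn_mul_cos (a := π * |δ|) (b := π * α) ⟨by positivity, by nlinarith⟩
      ⟨by positivity, by nlinarith⟩ (by gcongr)
    simp only [mul_assoc] at this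
    exact le_of_mul_le_mul_left this hpi
  have hc0 : 0 ≤ cos (π * α) :=
    cos_nonneg_of_neg_pi_div_two_le_of_le (by nlinarith) (by nlinarith)
  rw [abs_div, abs_mul, abs_mul, abs_mul, abs_two, abs_of_pos hpi, hcos,
    abs_of_pos (show 0 < ((m : ℝ) + 1 / 2) ^ 2 - δ ^ 2 by linarith), mul_assoc, mul_assoc]
  gcongr

theorem hasSum_cosCoeff {α : ℝ} (hα : |α| < 1) :
    HasSum (fun m : ℕ ↦ 2 * α * sin (π * α) / (π * ((m + 1) ^ 2 - α ^ 2)))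
      (sinc (π * α) - cos (π * α)) := by
  have h := (hasSum_cos_mul hα (t := π) (abs_of_pos pi_pos).le).neg
  rw [neg_sub, mul_comm α π] at h
  refine h.congr_fun fun m ↦ ?_
  have hc : cos (((m : ℝ) + 1) * π) = (-1) ^ (m + 1) := by
    exact_mod_cast cos_nat_mul_pi (m + 1)
  have hp : (-1 : ℝ) ^ m * (-1) ^ m = 1 := by rw [← mul_pow]; simp
  rw [hc, pow_succ]
  linear_combination (-(2 * α * sin (π * α) / (π * ((m + 1) ^ 2 - α ^ 2)))) * hp

theorem hasSum_sinCoeff {α : ℝ} (hα : |α| < 1 / 2) :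
    HasSum (fun m : ℕ ↦ 2 * α * cos (π * α) / (π * ((m + 1 / 2) ^ 2 - α ^ 2)))
      (sin (π * α)) := by
  have h := hasSum_sin_mul hα (t := π) (abs_of_pos pi_pos).le
  rw [mul_comm α π] at h
  refine h.congr_fun fun m ↦ ?_
  have hc : sin (((m : ℝ) + 1 / 2) * π) = (-1) ^ m := by
    have e : ((m : ℝ) + 1 / 2) * π = π / 2 + m * π := by ring
    rw [e, sin_add_nat_mul_pi, sin_pi_div_two, mul_one]
  have hp : (-1 : ℝ) ^ m * (-1) ^ m = 1 := by rw [← mul_pow]; simp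
  rw [hc]
  linear_combination (-(2 * α * cos (π * α) / (π * ((m + 1 / 2) ^ 2 - α ^ 2)))) * hp

open scoped Matrix.Norms.L2Operator in
/-- A matrix whose entries are `F j k` times a Schur multiplier `∑ m, d m j * e m k` has spectral
norm at most `(∑ m, sup ‖d m‖ * sup ‖e m‖) * ‖F‖`. -/
theorem Matrix.l2_opNorm_le_of_hasSum {n ι : Type*} [Fintype n] [DecidableEq n]
    {F A : Matrix n n ℂ} {d e : ι → n → ℂ} {D : ι → ℝ} {S : ℝ} (hD : HasSum D S)
    (hd : ∀ m j, ‖d m j‖ ≤ D m) (he : ∀ m k, ‖e m k‖ ≤ 1)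
    (hA : ∀ j k, HasSum (fun m ↦ d m j * F j k * e m k) (A j k)) : ‖A‖ ≤ S * ‖F‖ := by
  cases isEmpty_or_nonempty n with
  | inl h =>
    rw [Subsingleton.elim A 0, Subsingleton.elim F 0]
    simp
  | inr h =>
    have hsum : HasSum (fun m ↦ Matrix.diagonal (d m) * F * Matrix.diagonal (e m)) A := by
      refine Pi.hasSum.mpr fun j ↦ Pi.hasSum.mpr fun k ↦ ?_
      simpa [Matrix.mul_diagonal, Matrix.diagonal_mul] using hA j k
    refine hsum.norm_le_of_bounded (hD.mul_right _) fun m ↦ ?_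
    have hDm : 0 ≤ D m := (norm_nonneg _).trans (hd m h.some)
    calc ‖Matrix.diagonal (d m) * F * Matrix.diagonal (e m)‖
        ≤ ‖Matrix.diagonal (d m)‖ * ‖F‖ * ‖Matrix.diagonal (e m)‖ :=
          (norm_mul_le _ _).trans (mul_le_mul_of_nonneg_right (norm_mul_le _ _) (norm_nonneg _))
      _ ≤ D m * ‖F‖ * 1 := by
          rw [Matrix.l2_opNorm_diagonal, Matrix.l2_opNorm_diagonal]
          gcongr
          · exact (pi_norm_le_iff_of_nonneg hDm).mpr (hd m)
          · exact (pi_norm_le_iff_of_nonneg zero_le_one).mpr (he m)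
      _ = D m * ‖F‖ := mul_one _

open scoped Matrix.Norms.L2Operator in
/-- Kadec's estimate: multiplying the entries of `F` by `exp (-i δⱼ tₖ)` with `|δⱼ| ≤ α < 1/4` and
`|tₖ| ≤ π` perturbs `F` by at most `(1 - cos (π α) + sin (π α)) * ‖F‖` in spectral norm. -/
theorem Matrix.l2_opNorm_exp_perturbation_le {n : Type*} [Fintype n] [DecidableEq n]
    {α : ℝ} (hα0 : 0 ≤ α) (hα : α < 1 / 4) {δ t : n → ℝ} (hδ : ∀ j, |δ j| ≤ α)
    (ht : ∀ k, |t k| ≤ π) (F : Matrix n n ℂ) :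
    ‖Matrix.of fun j k ↦ F j k * (Complex.exp (-Complex.I * δ j * t k) - 1)‖ ≤
      (1 - cos (π * α) + sin (π * α)) * ‖F‖ := by
  have hα1 : |α| < 1 / 2 := by rw [abs_of_nonneg hα0]; linarith
  have hsplit : (Matrix.of fun j k ↦ F j k * (Complex.exp (-Complex.I * δ j * t k) - 1)) =
      (Matrix.of fun j k ↦ ((sinc (π * δ j) - 1 : ℝ) : ℂ) * F j k) +
      (Matrix.of fun j k ↦ F j k * ((cos (δ j * t k) - sinc (π * δ j) : ℝ) : ℂ)) +
      (Matrix.of fun j k ↦ F j k * ((-Complex.I) * ((sin (δ j * t k) : ℝ) : ℂ))) := by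
    ext j k
    have e : -Complex.I * δ j * t k = ((-(δ j * t k) : ℝ) : ℂ) * Complex.I := by push_cast; ring
    simp only [Matrix.add_apply, Matrix.of_apply]
    rw [e, Complex.exp_mul_I, ← Complex.ofReal_cos, ← Complex.ofReal_sin, cos_neg, sin_neg]
    push_cast
    ring
  have hsinc : ‖Matrix.of fun j k ↦ ((sinc (π * δ j) - 1 : ℝ) : ℂ) * F j k‖ ≤
      (1 - sinc (π * α)) * ‖F‖ := by
    refine Matrix.l2_opNorm_le_of_hasSum (ι := Unit) (D := fun _ ↦ 1 - sinc (π * α))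
      (d := fun _ j ↦ ((sinc (π * δ j) - 1 : ℝ) : ℂ)) (e := fun _ _ ↦ 1) (hasSum_unique _)
      (fun _ j ↦ ?_) (fun _ _ ↦ by simp) fun j k ↦ ?_
    · rw [Complex.norm_real, norm_eq_abs]
      exact abs_sinc_sub_one_le hα (hδ j)
    · convert! hasSum_unique (fun _ : Unit ↦ ((sinc (π * δ j) - 1 : ℝ) : ℂ) * F j k * 1) using 1
      simp
  have hcos : ‖Matrix.of fun j k ↦ F j k * ((cos (δ j * t k) - sinc (π * δ j) : ℝ) : ℂ)‖ ≤
      (sinc (π * α) - cos (π * α)) * ‖F‖ := by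
    refine Matrix.l2_opNorm_le_of_hasSum (ι := ℕ) (hasSum_cosCoeff (hα1.trans (by norm_num)))
      (d := fun m j ↦ (((-1) ^ m * (2 * δ j * sin (π * δ j) /
        (π * ((m + 1) ^ 2 - δ j ^ 2))) : ℝ) : ℂ))
      (e := fun m k ↦ ((cos ((m + 1) * t k) : ℝ) : ℂ))
      (fun m j ↦ ?_) (fun m k ↦ ?_) fun j k ↦ ?_
    · rw [Complex.norm_real, norm_eq_abs, abs_mul, abs_neg_one_pow, one_mul]
      exact abs_cosCoeff_le hα (hδ j) m
    · rw [Complex.norm_real, norm_eq_abs]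
      exact abs_cos_le_one _
    · have h := (Complex.hasSum_ofReal.mpr
        (hasSum_cos_mul (a := δ j) ((hδ j).trans_lt (by linarith)) (ht k))).mul_left (F j k)
      refine h.congr_fun fun m ↦ ?_
      push_cast
      ring
  have hsin : ‖Matrix.of fun j k ↦ F j k * ((-Complex.I) * ((sin (δ j * t k) : ℝ) : ℂ))‖ ≤
      sin (π * α) * ‖F‖ := by
    refine Matrix.l2_opNorm_le_of_hasSum (ι := ℕ) (hasSum_sinCoeff hα1)
      (d := fun m j ↦ -Complex.I * (((-1) ^ m * (2 * δ j * cos (π * δ j) /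
        (π * ((m + 1 / 2) ^ 2 - δ j ^ 2))) : ℝ) : ℂ))
      (e := fun m k ↦ ((sin ((m + 1 / 2) * t k) : ℝ) : ℂ))
      (fun m j ↦ ?_) (fun m k ↦ ?_) fun j k ↦ ?_
    · rw [norm_mul, norm_neg, Complex.norm_I, one_mul, Complex.norm_real, norm_eq_abs, abs_mul,
        abs_neg_one_pow, one_mul]
      exact abs_sinCoeff_le hα (hδ j) m
    · rw [Complex.norm_real, norm_eq_abs]
      exact abs_sin_le_one _
    · have h := ((Complex.hasSum_ofReal.mpr
        (hasSum_sin_mul ((hδ j).trans_lt (by linarith)) (ht k))).mul_left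
          (-Complex.I)).mul_left (F j k)
      refine h.congr_fun fun m ↦ ?_
      push_cast
      ring
  rw [hsplit]
  refine (norm_add₃_le).trans ?_
  linarith

/-- The (centred) discrete Fourier transform matrix satisfies `Fᴴ F = (2N+1) I`. -/
theorem dft_conjTranspose_mul_self {N : ℕ} {F : Matrix (Fin (2 * N + 1)) (Fin (2 * N + 1)) ℂ}
    (hF : ∀ j k, F j k = Complex.exp (-Complex.I *
      (((((j : ℕ) : ℝ) - (N : ℝ)) * (2 * π / (2 * N + 1)) : ℝ) : ℂ) * (((k : ℕ) : ℂ) - (N : ℂ)))) :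
    F.conjTranspose * F = (2 * N + 1 : ℂ) • (1 : Matrix (Fin (2 * N + 1)) (Fin (2 * N + 1)) ℂ) := by
  ext k l
  have hM : (2 * (N : ℂ) + 1) ≠ 0 := by exact_mod_cast (2 * N).succ_ne_zero
  set ζ : ℂ := Complex.exp (2 * π * Complex.I * (((k : ℕ) : ℂ) - ((l : ℕ) : ℂ)) / (2 * N + 1)) with hζ
  have hterm : ∀ j : Fin (2 * N + 1), star (F j k) * F j l =
      Complex.exp (-N * (2 * π * Complex.I * (((k : ℕ) : ℂ) - ((l : ℕ) : ℂ)) / (2 * N + 1))) *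
        ζ ^ (j : ℕ) := by
    intro j
    rw [hF, hF, Complex.star_def, ← Complex.exp_conj, hζ, ← Complex.exp_nat_mul, ← Complex.exp_add,
      ← Complex.exp_add]
    congr 1
    simp only [map_mul, map_neg, map_sub, Complex.conj_I, Complex.conj_ofReal, map_natCast]
    push_cast
    field_simp
    ring
  rw [Matrix.mul_apply]
  simp only [Matrix.conjTranspose_apply, hterm]
  rw [← Finset.mul_sum, Fin.sum_univ_eq_sum_range (fun i ↦ ζ ^ i)]
  rcases eq_or_ne k l with rfl | hkl
  · simp [hζ]
  · have hpow : ζ ^ (2 * N + 1) = 1 := by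
      rw [hζ, ← Complex.exp_nat_mul, Complex.exp_eq_one_iff]
      refine ⟨(k : ℤ) - (l : ℤ), ?_⟩
      push_cast
      field_simp
    have hne : ζ ≠ 1 := by
      intro h
      rw [hζ, Complex.exp_eq_one_iff] at h
      obtain ⟨n, hn⟩ := h
      have hpi : (π : ℂ) ≠ 0 := by exact_mod_cast pi_ne_zero
      have h1 : ((k : ℕ) : ℂ) - ((l : ℕ) : ℂ) = n * (2 * N + 1) := by
        have hI := Complex.I_ne_zero
        field_simp at hn
        linear_combination hn
      have h2 : ((k : ℕ) : ℤ) - ((l : ℕ) : ℤ) = n * (2 * N + 1) := by exact_mod_cast h1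
      have hk := k.isLt
      have hl := l.isLt
      have hn0 : n = 0 := by
        by_contra hn0
        rcases lt_or_gt_of_ne hn0 with h | h <;> nlinarith
      apply hkl
      ext
      rw [hn0] at h2
      omega
    rw [geom_sum_eq hne, hpow]
    simp [hkl]

open scoped Matrix.Norms.L2Operator in
/-- the NUDFT matrix at α-perturbed nodes (α < 1/4) is invertible, with
a spectral-norm bound on its inverse. -/
theorem nudft_inverse_spectral_bound (N : ℕ) (hN : 0 < N) (α : ℝ) (hα0 : 0 ≤ α) (hα : α < 1/4)
    (xt : Fin (2*N+1) → ℝ)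
    (hxt : ∀ j, |xt j - (((j : ℕ) : ℝ) - (N : ℝ)) * (2*π/(2*N+1))| ≤ α * (2*π/(2*N+1)))
    (Ftil : Matrix (Fin (2*N+1)) (Fin (2*N+1)) ℂ)
    (hFtil : ∀ j k, Ftil j k =
      Complex.exp (-Complex.I * (xt j : ℂ) * (((k : ℕ) : ℂ) - (N : ℂ)))) :
    IsUnit Ftil ∧
    ‖Matrix.toEuclideanCLM (𝕜 := ℂ) Ftil⁻¹‖ ≤
      1 / ((1 - (1 - Real.cos (π*α) + Real.sin (π*α))) * Real.sqrt (2*N+1)) := by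
  rw [Matrix.l2_opNorm_toEuclideanCLM]
  have hpi := pi_pos
  set h : ℝ := 2 * π / (2 * N + 1) with hh
  have hpos : 0 < h := by positivity
  set φ : ℝ := 1 - cos (π * α) + sin (π * α) with hφ
  set s : ℝ := √(2 * N + 1) with hs
  have hs0 : 0 < s := by positivity
  have hss : s * s = 2 * N + 1 := mul_self_sqrt (by positivity)
  have hφ1 : φ < 1 := by
    have : sin (π * α) < cos (π * α) := by
      rw [← sin_pi_div_two_sub]
      exact sin_lt_sin_of_lt_of_le_pi_div_two (by nlinarith) (by nlinarith) (by nlinarith)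
    linarith
  let F : Matrix (Fin (2 * N + 1)) (Fin (2 * N + 1)) ℂ := Matrix.of fun j k ↦
    Complex.exp (-Complex.I * (((((j : ℕ) : ℝ) - (N : ℝ)) * h : ℝ) : ℂ) * (((k : ℕ) : ℂ) - (N : ℂ)))
  have hF : ∀ j k, F j k = Complex.exp (-Complex.I * (((((j : ℕ) : ℝ) - (N : ℝ)) * h : ℝ) : ℂ) *
      (((k : ℕ) : ℂ) - (N : ℂ))) := fun j k ↦ rfl
  have hFF : F.conjTranspose * F = (2 * N + 1 : ℂ) • 1 :=
    dft_conjTranspose_mul_self hF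
  have hM : (2 * (N : ℂ) + 1) ≠ 0 := by exact_mod_cast (2 * N).succ_ne_zero
  have hMnorm : ‖(2 * (N : ℂ) + 1)‖ = s * s := by
    rw [hss]
    exact_mod_cast Complex.norm_natCast (2 * N + 1)
  have hFnorm : ‖F‖ = s := by
    have := Matrix.l2_opNorm_conjTranspose_mul_self F
    rw [hFF, norm_smul, CStarRing.norm_one, mul_one, hMnorm] at this
    exact ((mul_self_inj hs0.le (norm_nonneg _)).mp this).symm
  let G : Matrix (Fin (2 * N + 1)) (Fin (2 * N + 1)) ℂ := (2 * N + 1 : ℂ)⁻¹ • F.conjTranspose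
  have hGF : G * F = 1 := by
    rw [Matrix.smul_mul, hFF, smul_smul, inv_mul_cancel₀ hM, one_smul]
  have hGnorm : ‖G‖ = s⁻¹ := by
    rw [norm_smul, norm_inv, hMnorm, Matrix.l2_opNorm_conjTranspose, hFnorm]
    field_simp
  have hdiff : ‖Ftil - F‖ ≤ φ * s := by
    have key := Matrix.l2_opNorm_exp_perturbation_le hα0 hα
      (δ := fun j : Fin (2 * N + 1) ↦ (xt j - (((j : ℕ) : ℝ) - (N : ℝ)) * h) / h)
      (t := fun k : Fin (2 * N + 1) ↦ (((k : ℕ) : ℝ) - (N : ℝ)) * h)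
      (fun j ↦ ?_) (fun k ↦ ?_) F
    · rw [hFnorm] at key
      convert! key using 2
      ext j k
      have hhc : (h : ℂ) ≠ 0 := by exact_mod_cast hpos.ne'
      rw [Matrix.sub_apply, hFtil, Matrix.of_apply, mul_sub_one, hF, ← Complex.exp_add]
      congr 2
      push_cast
      field_simp
      ring
    · rw [abs_div, abs_of_pos hpos, div_le_iff₀ hpos]
      exact hxt j
    · have hk : |((k : ℕ) : ℝ) - N| ≤ N := by
        have h1 : ((k : ℕ) : ℝ) ≤ 2 * N := by exact_mod_cast Nat.lt_succ_iff.mp k.isLt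
        have h2 : (0 : ℝ) ≤ (k : ℕ) := Nat.cast_nonneg _
        rw [abs_le]; constructor <;> linarith
      rw [abs_mul, abs_of_pos hpos]
      calc |((k : ℕ) : ℝ) - N| * h ≤ N * h := by gcongr
        _ ≤ π := by
          rw [hh, mul_div_assoc', div_le_iff₀ (by positivity)]
          linarith
  have hE : ‖G * (F - Ftil)‖ ≤ φ := by
    refine (norm_mul_le _ _).trans ?_
    rw [hGnorm, norm_sub_rev]
    calc s⁻¹ * ‖Ftil - F‖ ≤ s⁻¹ * (φ * s) := by gcongr
      _ = φ := by field_simp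
  have hfac : G * Ftil = 1 - G * (F - Ftil) := by
    rw [mul_sub, hGF, sub_sub_cancel]
  have hunit : IsUnit Ftil := by
    have : IsUnit (G * Ftil) := hfac ▸ isUnit_one_sub_of_norm_lt_one (hE.trans_lt hφ1)
    rw [Matrix.isUnit_iff_isUnit_det, Matrix.det_mul] at this
    exact (Matrix.isUnit_iff_isUnit_det _).mpr (isUnit_of_mul_isUnit_right this)
  refine ⟨hunit, ?_⟩
  have hinv : Ftil * Ftil⁻¹ = 1 :=
    Matrix.mul_nonsing_inv _ ((Matrix.isUnit_iff_isUnit_det _).mp hunit)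
  have hrec : Ftil⁻¹ = G + G * (F - Ftil) * Ftil⁻¹ := by
    have : G * Ftil * Ftil⁻¹ = (1 - G * (F - Ftil)) * Ftil⁻¹ := by rw [hfac]
    rw [mul_assoc, hinv, mul_one, sub_mul, one_mul] at this
    exact (sub_eq_iff_eq_add.mp this.symm)
  have hbound : ‖Ftil⁻¹‖ ≤ s⁻¹ + φ * ‖Ftil⁻¹‖ := by
    calc ‖Ftil⁻¹‖ = ‖G + G * (F - Ftil) * Ftil⁻¹‖ := congrArg _ hrec
      _ ≤ ‖G‖ + ‖G * (F - Ftil)‖ * ‖Ftil⁻¹‖ :=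
        (norm_add_le _ _).trans (add_le_add_right (norm_mul_le _ _) _)
      _ ≤ s⁻¹ + φ * ‖Ftil⁻¹‖ := by rw [hGnorm]; gcongr
  rw [← div_div, div_right_comm, le_div_iff₀ (sub_pos.mpr hφ1), one_div]
  linarith
end

section
/- Let N be a positive integer, 0 ≤ α < 1/4, and let F̃ be the NUDFT matrix associated with a set of α-perturbed nodes. Then F̃ is invertible and its spectral condition number satisfies κ₂(F̃) = ‖F̃‖₂ ‖F̃^{−1}‖₂ ≤ (1+φ_α)/(1−φ_α), where φ_α = 1 − cos(πα) + sin(πα); in particular the bound is independent of N. -/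
open Real Finset

lemma norm_toEuclideanCLM_of_conjTranspose_mul_self {n : Type*} [Fintype n] [DecidableEq n]
    {A : Matrix n n ℂ} {s : ℝ} (hs : 0 ≤ s) (hA : A.conjTranspose * A = ((s ^ 2 : ℝ) : ℂ) • 1)
    (v : EuclideanSpace ℂ n) :
    ‖Matrix.toEuclideanCLM (𝕜 := ℂ) A v‖ = s * ‖v‖ := by
  have hsq : ‖Matrix.toEuclideanCLM (𝕜 := ℂ) A v‖ ^ 2 = (s * ‖v‖) ^ 2 := by
    have hinner : inner ℂ (Matrix.toEuclideanCLM (𝕜 := ℂ) A v) (Matrix.toEuclideanCLM (𝕜 := ℂ) A v)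
        = inner ℂ v (Matrix.toEuclideanCLM (𝕜 := ℂ) (A.conjTranspose * A) v) := by
      rw [map_mul, ← Matrix.star_eq_conjTranspose, map_star, ContinuousLinearMap.star_eq_adjoint,
        mul_apply_eq_comp, ContinuousLinearMap.adjoint_inner_right]
    rw [hA, map_smul, map_one, smul_apply, one_apply_eq_self,
      inner_smul_right, inner_self_eq_norm_sq_to_K, inner_self_eq_norm_sq_to_K] at hinner
    rw [mul_pow]
    exact Complex.ofReal_injective (by push_cast at hinner ⊢; exact hinner)
  exact (pow_left_inj₀ (norm_nonneg _) (by positivity) two_ne_zero).mp hsq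

/-- A Schur multiplier given by a series of rank-one multipliers is bounded by the sum of their
bounds. -/
lemma norm_toEuclideanCLM_schur_le {n ι : Type*} [Fintype n] [DecidableEq n]
    {A P : Matrix n n ℂ} {s c : ℝ} (hs : 0 ≤ s)
    (hA : ∀ v, ‖Matrix.toEuclideanCLM (𝕜 := ℂ) A v‖ ≤ s * ‖v‖)
    (a b : ι → n → ℂ) (C : ι → ℝ) (ha : ∀ i j, ‖a i j‖ ≤ C i) (hb : ∀ i k, ‖b i k‖ ≤ 1)
    (hC0 : ∀ i, 0 ≤ C i) (hC : HasSum C c)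
    (hP : ∀ j k, HasSum (fun i => a i j * A j k * b i k) (P j k)) (v : EuclideanSpace ℂ n) :
    ‖Matrix.toEuclideanCLM (𝕜 := ℂ) P v‖ ≤ c * s * ‖v‖ := by
  have hdiag : ∀ (d : n → ℂ) (r : ℝ), 0 ≤ r → (∀ j, ‖d j‖ ≤ r) → ∀ w : EuclideanSpace ℂ n,
      ‖Matrix.toEuclideanCLM (𝕜 := ℂ) (Matrix.diagonal d) w‖ ≤ r * ‖w‖ := by
    intro d r hr hd w
    refine le_of_sq_le_sq ?_ (by positivity)
    rw [mul_pow, EuclideanSpace.norm_sq_eq, EuclideanSpace.norm_sq_eq, Finset.mul_sum]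
    refine Finset.sum_le_sum fun j _ => ?_
    rw [Matrix.ofLp_toEuclideanCLM, Matrix.mulVec_diagonal, norm_mul, mul_pow]
    gcongr
    exact hd j
  have hsum : HasSum (fun i => Matrix.toEuclideanCLM (𝕜 := ℂ) (Matrix.diagonal (a i))
      (Matrix.toEuclideanCLM (𝕜 := ℂ) A
        (Matrix.toEuclideanCLM (𝕜 := ℂ) (Matrix.diagonal (b i)) v)))
      (Matrix.toEuclideanCLM (𝕜 := ℂ) P v) := by
    refine (PiLp.continuousLinearEquiv 2 ℂ (fun _ : n => ℂ)).hasSum'.mp (Pi.hasSum.mpr ?_)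
    intro j
    have hj := hasSum_sum (s := Finset.univ) fun k _ => (hP j k).mul_right (v k)
    convert! hj using 1
    ext i
    simp only [PiLp.coe_continuousLinearEquiv, Matrix.ofLp_toEuclideanCLM, Matrix.mulVec_diagonal]
    rw [Matrix.mulVec, dotProduct, Finset.mul_sum]
    refine Finset.sum_congr rfl fun k _ => ?_
    rw [Matrix.mulVec_diagonal]
    ring
  have hC' := hC.mul_right (s * ‖v‖)
  rw [mul_assoc]
  refine hsum.norm_le_of_bounded hC' fun i => ?_
  refine (hdiag _ _ (hC0 i) (ha i) _).trans ?_
  refine mul_le_mul_of_nonneg_left ((hA _).trans ?_) (hC0 i)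
  refine mul_le_mul_of_nonneg_left ?_ hs
  simpa using hdiag (b i) 1 zero_le_one (hb i) v

/-- A matrix within relative distance `φ < 1` of a multiple of an isometry is invertible and
well conditioned. -/
lemma condition_number_le_of_near_isometry {n : Type*} [Fintype n] [DecidableEq n]
    {A B : Matrix n n ℂ} {s φ : ℝ} (hs : 0 < s) (hφ0 : 0 ≤ φ) (hφ : φ < 1)
    (hA : ∀ v, ‖Matrix.toEuclideanCLM (𝕜 := ℂ) A v‖ = s * ‖v‖)
    (hB : ∀ v, ‖Matrix.toEuclideanCLM (𝕜 := ℂ) (B - A) v‖ ≤ φ * s * ‖v‖) :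
    IsUnit B ∧ ‖Matrix.toEuclideanCLM (𝕜 := ℂ) B‖ * ‖Matrix.toEuclideanCLM (𝕜 := ℂ) B⁻¹‖ ≤
      (1 + φ) / (1 - φ) := by
  have hsplit : ∀ v, Matrix.toEuclideanCLM (𝕜 := ℂ) B v =
      Matrix.toEuclideanCLM (𝕜 := ℂ) A v + Matrix.toEuclideanCLM (𝕜 := ℂ) (B - A) v := by
    intro v
    rw [← add_apply, ← map_add, add_sub_cancel]
  have hupper : ∀ v, ‖Matrix.toEuclideanCLM (𝕜 := ℂ) B v‖ ≤ (1 + φ) * s * ‖v‖ := by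
    intro v
    rw [hsplit]
    have := norm_add_le (Matrix.toEuclideanCLM (𝕜 := ℂ) A v)
      (Matrix.toEuclideanCLM (𝕜 := ℂ) (B - A) v)
    linarith [hA v, hB v]
  have hlower : ∀ v, (1 - φ) * s * ‖v‖ ≤ ‖Matrix.toEuclideanCLM (𝕜 := ℂ) B v‖ := by
    intro v
    rw [hsplit]
    have := norm_sub_le_norm_add (Matrix.toEuclideanCLM (𝕜 := ℂ) A v)
      (Matrix.toEuclideanCLM (𝕜 := ℂ) (B - A) v)
    linarith [hA v, hB v]
  have hpos : 0 < (1 - φ) * s := mul_pos (by linarith) hs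
  have hunit : IsUnit B := by
    rw [← Matrix.mulVec_injective_iff_isUnit, ← Matrix.coe_mulVecLin,
      ← LinearMap.ker_eq_bot, LinearMap.ker_eq_bot']
    intro x hx
    have h := hlower (WithLp.toLp 2 x)
    rw [Matrix.toEuclideanCLM_toLp, ← Matrix.mulVecLin_apply, hx, WithLp.toLp_zero, norm_zero] at h
    have h0 : ‖WithLp.toLp 2 x‖ = 0 :=
      le_antisymm (nonpos_of_mul_nonpos_right h hpos) (norm_nonneg _)
    simpa using h0
  refine ⟨hunit, ?_⟩
  have hinv : ‖Matrix.toEuclideanCLM (𝕜 := ℂ) B⁻¹‖ ≤ ((1 - φ) * s)⁻¹ := by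
    refine ContinuousLinearMap.opNorm_le_bound _ (by positivity) fun w => ?_
    have h := hlower (Matrix.toEuclideanCLM (𝕜 := ℂ) B⁻¹ w)
    rw [← mul_apply_eq_comp, ← map_mul,
      Matrix.mul_nonsing_inv _ ((Matrix.isUnit_iff_isUnit_det _).mp hunit), map_one,
      one_apply_eq_self] at h
    rwa [inv_mul_eq_div, le_div_iff₀' hpos]
  calc _ ≤ (1 + φ) * s * ((1 - φ) * s)⁻¹ :=
        mul_le_mul (ContinuousLinearMap.opNorm_le_bound _ (by positivity) hupper) hinv
          (norm_nonneg _) (by positivity)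
    _ = (1 + φ) / (1 - φ) := by
        have : 1 - φ ≠ 0 := by linarith
        field_simp

lemma hasSum_fourier_of_continuous {f : ℝ → ℂ} (hf : Continuous f) (hper : f (-π) = f π)
    {c : ℤ → ℂ}
    (hc : ∀ n : ℤ, ∫ t in -π..π, Complex.exp (-(n * t * Complex.I)) * f t = 2 * π * c n)
    (hsum : Summable c) {t : ℝ} (ht : t ∈ Set.Ico (-π) π) :
    HasSum (fun n : ℤ => c n * Complex.exp (n * t * Complex.I)) (f t) := by
  have : Fact (0 < 2 * π) := ⟨by positivity⟩
  have hend : -π + 2 * π = π := by ring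
  have hcont : Continuous (AddCircle.liftIco (2 * π) (-π) f) :=
    AddCircle.liftIco_continuous (by rw [hend, hper]) hf.continuousOn
  have hπ : (π : ℂ) ≠ 0 := by exact_mod_cast Real.pi_ne_zero
  have hcoeff : fourierCoeff (AddCircle.liftIco (2 * π) (-π) f) = c := by
    ext n
    rw [fourierCoeff_liftIco_eq, fourierCoeffOn_eq_integral]
    have hint : ∫ x in -π..(-π + 2 * π),
        (fourier (-n) (x : AddCircle (-π + 2 * π - -π)) : ℂ) • f x = 2 * π * c n := by
      rw [← hc n, hend]
      refine intervalIntegral.integral_congr fun x _ => ?_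
      simp only [fourier_coe_apply, smul_eq_mul]
      congr 2
      push_cast
      field_simp
      ring
    rw [hint, Complex.real_smul]
    push_cast
    field_simp
    ring
  have h := has_pointwise_sum_fourier_series_of_summable
    (f := (⟨_, hcont⟩ : C(AddCircle (2 * π), ℂ))) (by
      rw [ContinuousMap.coe_mk, hcoeff]; exact hsum) (t : AddCircle (2 * π))
  rw [ContinuousMap.coe_mk, hcoeff, AddCircle.liftIco_coe_apply (by rwa [hend])] at h
  convert! h using 2 with n
  rw [fourier_coe_apply, smul_eq_mul]
  congr 2
  push_cast
  field_simp

lemma integral_exp_mul_mul_I_eq_sinc (b : ℝ) :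
    ∫ t in -π..π, Complex.exp (b * t * Complex.I) = 2 * π * sinc (π * b) := by
  by_cases hb : b = 0
  · simp [hb]; ring
  have h := intervalIntegral.integral_comp_mul_left (a := -π) (b := π)
    (fun x : ℝ => Complex.exp (x * Complex.I)) hb
  have hb' : (b : ℂ) ≠ 0 := by exact_mod_cast hb
  push_cast at h
  rw [h, mul_neg, integral_exp_mul_I_eq_sinc, Complex.real_smul, mul_comm b π]
  push_cast
  field_simp

/-- Absolute values of the Fourier coefficients of `1 - cos (δ t)` on `[-π, π]`. -/
noncomputable def cosCoeff (δ : ℝ) (n : ℤ) : ℝ :=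
  if n = 0 then 1 - sinc (π * δ) else δ * sin (π * δ) / (π * ((n : ℝ) ^ 2 - δ ^ 2))

/-- Absolute values of the Fourier coefficients of `sin (δ t) * exp (i t / 2)` on `[-π, π]`. -/
noncomputable def sinCoeff (δ : ℝ) (n : ℤ) : ℝ :=
  δ * cos (π * δ) / (π * (((n : ℝ) - 1 / 2) ^ 2 - δ ^ 2))

lemma sq_ge_one_of_int_ne_zero {n : ℤ} (hn : n ≠ 0) : 1 ≤ (n : ℝ) ^ 2 := by
  exact_mod_cast (by positivity : 0 < n ^ 2)

lemma sq_le_of_abs_le_quarter {δ : ℝ} (hδ : |δ| ≤ 1 / 4) : δ ^ 2 ≤ 1 / 16 := by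
  have := pow_le_pow_left₀ (abs_nonneg δ) hδ 2
  rw [sq_abs] at this
  linarith

lemma int_sq_div_le {n : ℤ} (hn : n ≠ 0) {δ : ℝ} (hδ : |δ| ≤ 1 / 4) :
    (n : ℝ) ^ 2 / 8 ≤ (n : ℝ) ^ 2 - δ ^ 2 := by
  linarith [sq_ge_one_of_int_ne_zero hn, sq_le_of_abs_le_quarter hδ]

lemma half_int_sq_ge (n : ℤ) : 1 / 4 ≤ ((n : ℝ) - 1 / 2) ^ 2 := by
  have h : 0 ≤ n * (n - 1) := by
    rcases le_or_gt n 0 with h | h <;> nlinarith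
  have h' : (0 : ℝ) ≤ n * (n - 1) := by exact_mod_cast h
  linarith

lemma int_sq_div_le_half_int_sq (n : ℤ) {δ : ℝ} (hδ : |δ| ≤ 1 / 4) :
    (n : ℝ) ^ 2 / 8 ≤ ((n : ℝ) - 1 / 2) ^ 2 - δ ^ 2 := by
  have hδ2 := sq_le_of_abs_le_quarter hδ
  have h : 0 ≤ 14 * n ^ 2 - 16 * n + 3 := by
    rcases le_or_gt n 0 with h | h
    · nlinarith
    · rcases eq_or_lt_of_le (Int.add_one_le_of_lt h) with h1 | h1
      · subst h1; norm_num
      · nlinarith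
  have h' : (0 : ℝ) ≤ 14 * n ^ 2 - 16 * n + 3 := by exact_mod_cast h
  linarith

lemma sin_pi_mul_sub_int (x : ℝ) (n : ℤ) : sin (π * (x - n)) = (-1) ^ n * sin (π * x) := by
  rw [mul_sub, mul_comm π (n : ℝ), sin_sub_int_mul_pi]

lemma summable_of_abs_le_mul_inv_sq {f : ℤ → ℝ} (K : ℝ)
    (h : ∀ n, n ≠ 0 → |f n| ≤ K * (1 / (n : ℝ) ^ 2)) : Summable f := by
  have hs : Summable fun n : ℤ => K * (1 / (n : ℝ) ^ 2) :=
    (Real.summable_one_div_int_pow.mpr one_lt_two).mul_left K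
  refine Summable.of_norm_bounded_eventually hs ?_
  filter_upwards [(Set.finite_singleton (0 : ℤ)).compl_mem_cofinite] with n hn
  exact h n hn

lemma abs_div_pi_mul_le {x y m : ℝ} (hx : |x| ≤ 1) (hm : 0 < m) (hy : m / 8 ≤ y) :
    |x / (π * y)| ≤ 8 * (1 / m) := by
  have hy0 : 0 < y := by linarith
  have hπ := Real.pi_gt_three
  rw [abs_div, abs_of_pos (by positivity : 0 < π * y), div_le_iff₀ (by positivity)]
  have : 1 ≤ 8 * (1 / m) * (π * y) := by
    rw [mul_one_div, div_mul_eq_mul_div, le_div_iff₀ hm]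
    nlinarith
  linarith

lemma summable_cosCoeff {δ : ℝ} (hδ : |δ| ≤ 1 / 4) : Summable (cosCoeff δ) := by
  refine summable_of_abs_le_mul_inv_sq 8 fun n hn => ?_
  rw [cosCoeff, if_neg hn]
  refine abs_div_pi_mul_le ?_ (by positivity) (int_sq_div_le hn hδ)
  rw [abs_mul]
  nlinarith [abs_nonneg δ, abs_nonneg (sin (π * δ)), abs_sin_le_one (π * δ)]

lemma summable_sinCoeff {δ : ℝ} (hδ : |δ| ≤ 1 / 4) : Summable (sinCoeff δ) := by
  refine summable_of_abs_le_mul_inv_sq 8 fun n hn => ?_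
  rw [sinCoeff]
  refine abs_div_pi_mul_le ?_ (by positivity) (int_sq_div_le_half_int_sq n hδ)
  rw [abs_mul]
  nlinarith [abs_nonneg δ, abs_nonneg (cos (π * δ)), abs_cos_le_one (π * δ)]

lemma sinc_add_sinc_eq_cosCoeff {δ : ℝ} (hδ : |δ| ≤ 1 / 4) (n : ℤ) :
    (sinc (π * (δ - n)) + sinc (π * (δ + n))) / 2 - (if n = 0 then 1 else 0) =
      -(-1) ^ n * cosCoeff δ n := by
  by_cases hn : n = 0
  · simp [hn, cosCoeff]
  have h2 : (n : ℝ) ^ 2 - δ ^ 2 ≠ 0 := by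
    have := sq_ge_one_of_int_ne_zero hn
    linarith [sq_le_of_abs_le_quarter hδ]
  have h3 : δ - n ≠ 0 := fun h => h2 (by linear_combination (-δ - n) * h)
  have h4 : δ + n ≠ 0 := fun h => h2 (by linear_combination (n - δ) * h)
  have hadd : sin (π * (δ + n)) = (-1) ^ n * sin (π * δ) := by
    rw [mul_add, mul_comm π (n : ℝ), sin_add_int_mul_pi]
  rw [sinc_of_ne_zero (mul_ne_zero pi_ne_zero h3), sinc_of_ne_zero (mul_ne_zero pi_ne_zero h4),
    cosCoeff, if_neg hn, if_neg hn, hadd, sin_pi_mul_sub_int]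
  have hfac : (n : ℝ) ^ 2 - δ ^ 2 = -((δ - n) * (δ + n)) := by ring
  rw [hfac]
  field_simp
  ring

lemma sinc_sub_sinc_eq_sinCoeff {δ : ℝ} (hδ : |δ| ≤ 1 / 4) (n : ℤ) :
    (sinc (π * (δ + 1 / 2 - n)) - sinc (π * (1 / 2 - δ - n))) / 2 =
      -(-1) ^ n * sinCoeff δ n := by
  have h2 : ((n : ℝ) - 1 / 2) ^ 2 - δ ^ 2 ≠ 0 := by
    linarith [sq_le_of_abs_le_quarter hδ, half_int_sq_ge n]
  have h3 : δ + 1 / 2 - n ≠ 0 := fun h => h2 (by linear_combination (1 / 2 - δ - n) * h)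
  have h4 : 1 / 2 - δ - n ≠ 0 := fun h => h2 (by linear_combination (δ + 1 / 2 - n) * h)
  have hs1 : sin (π * (δ + 1 / 2)) = cos (π * δ) := by
    rw [← sin_add_pi_div_two]; congr 1; ring
  have hs2 : sin (π * (1 / 2 - δ)) = cos (π * δ) := by
    rw [← sin_pi_div_two_sub]; congr 1; ring
  rw [sinc_of_ne_zero (mul_ne_zero pi_ne_zero h3), sinc_of_ne_zero (mul_ne_zero pi_ne_zero h4),
    sinCoeff, sin_pi_mul_sub_int, sin_pi_mul_sub_int, hs1, hs2]
  have hfac : ((n : ℝ) - 1 / 2) ^ 2 - δ ^ 2 = (δ + 1 / 2 - n) * (1 / 2 - δ - n) := by ring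
  rw [hfac]
  generalize hu : δ + 1 / 2 - n = u at *
  generalize hw : 1 / 2 - δ - n = w at *
  have hd : δ = (u - w) / 2 := by rw [← hu, ← hw]; ring
  generalize cos (π * δ) = C
  rw [hd]
  field_simp
  ring

lemma summable_neg_one_zpow_mul {f : ℤ → ℝ} (hf : Summable f) (z : ℂ) :
    Summable fun n : ℤ => z * (-1) ^ n * (f n : ℂ) := by
  refine Summable.of_norm ?_
  simpa using (hf.norm.mul_left ‖z‖)

lemma intervalIntegrable_exp_mul_I (b : ℝ) :
    IntervalIntegrable (fun t : ℝ => Complex.exp (b * t * Complex.I))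
      MeasureTheory.volume (-π) π :=
  Continuous.intervalIntegrable (by fun_prop) _ _

lemma hasSum_cosCoeff_s3 {δ : ℝ} (hδ : |δ| ≤ 1 / 4) {t : ℝ} (ht : t ∈ Set.Ico (-π) π) :
    HasSum (fun n : ℤ => -1 * (-1) ^ n * (cosCoeff δ n : ℂ) * Complex.exp (n * t * Complex.I))
      ((Real.cos (δ * t) : ℂ) - 1) := by
  refine hasSum_fourier_of_continuous (f := fun t : ℝ => ((Real.cos (δ * t) : ℂ) - 1))
    (by fun_prop) (by simp) (fun n => ?_) (summable_neg_one_zpow_mul (summable_cosCoeff hδ) _) ht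
  have hzero : ∫ t in -π..π, Complex.exp (((-n : ℤ) : ℝ) * t * Complex.I)
      = 2 * π * (if n = 0 then 1 else 0 : ℝ) := by
    rw [integral_exp_mul_mul_I_eq_sinc]
    congr 2
    split_ifs with hn
    · simp [hn]
    · rw [sinc_of_ne_zero (by simpa [pi_ne_zero] using hn), mul_comm, sin_int_mul_pi, zero_div]
  have hrw : ∀ t : ℝ, Complex.exp (-(n * t * Complex.I)) * ((Real.cos (δ * t) : ℂ) - 1) =
      1 / 2 * Complex.exp ((δ - n : ℝ) * t * Complex.I)
        + 1 / 2 * Complex.exp ((-(δ + n) : ℝ) * t * Complex.I)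
        - Complex.exp (((-n : ℤ) : ℝ) * t * Complex.I) := by
    intro t
    rw [Complex.ofReal_cos, Complex.cos, mul_sub, mul_div_assoc', mul_add, ← Complex.exp_add,
      ← Complex.exp_add]
    push_cast
    ring_nf
  simp_rw [hrw]
  rw [intervalIntegral.integral_sub
      (((intervalIntegrable_exp_mul_I _).const_mul _).add
        ((intervalIntegrable_exp_mul_I _).const_mul _)) (intervalIntegrable_exp_mul_I _),
    intervalIntegral.integral_add ((intervalIntegrable_exp_mul_I _).const_mul _)
      ((intervalIntegrable_exp_mul_I _).const_mul _), intervalIntegral.integral_const_mul,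
    intervalIntegral.integral_const_mul, hzero, integral_exp_mul_mul_I_eq_sinc,
    integral_exp_mul_mul_I_eq_sinc, mul_neg, sinc_neg]
  have h := congrArg (fun x : ℝ => (x : ℂ)) (sinc_add_sinc_eq_cosCoeff hδ n)
  push_cast at h ⊢
  linear_combination 2 * π * h

lemma hasSum_sinCoeff_s3 {δ : ℝ} (hδ : |δ| ≤ 1 / 4) {t : ℝ} (ht : t ∈ Set.Ico (-π) π) :
    HasSum (fun n : ℤ => Complex.I * (-1) ^ n * (sinCoeff δ n : ℂ) *
        Complex.exp (n * t * Complex.I))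
      ((Real.sin (δ * t) : ℂ) * Complex.exp (t / 2 * Complex.I)) := by
  refine hasSum_fourier_of_continuous
    (f := fun t : ℝ => (Real.sin (δ * t) : ℂ) * Complex.exp (t / 2 * Complex.I))
    (by fun_prop) ?_ (fun n => ?_) (summable_neg_one_zpow_mul (summable_sinCoeff hδ) _) ht
  · have h1 : Complex.exp (((-π : ℝ) : ℂ) / 2 * Complex.I) = -Complex.I := by
      rw [← Complex.exp_neg_pi_div_two_mul_I]; push_cast; ring_nf
    rw [h1, Complex.exp_pi_div_two_mul_I]
    simp
  have hrw : ∀ t : ℝ, Complex.exp (-(n * t * Complex.I)) *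
        ((Real.sin (δ * t) : ℂ) * Complex.exp (t / 2 * Complex.I)) =
      -Complex.I / 2 * Complex.exp ((δ + 1 / 2 - n : ℝ) * t * Complex.I)
        - -Complex.I / 2 * Complex.exp ((1 / 2 - δ - n : ℝ) * t * Complex.I) := by
    intro t
    have e1 : Complex.exp ((δ + 1 / 2 - n : ℝ) * t * Complex.I) =
        Complex.exp (-(n * t * Complex.I)) * Complex.exp (δ * t * Complex.I) *
          Complex.exp (t / 2 * Complex.I) := by
      rw [← Complex.exp_add, ← Complex.exp_add]; push_cast; ring_nf
    have e2 : Complex.exp ((1 / 2 - δ - n : ℝ) * t * Complex.I) =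
        Complex.exp (-(n * t * Complex.I)) * Complex.exp (-(δ * t) * Complex.I) *
          Complex.exp (t / 2 * Complex.I) := by
      rw [← Complex.exp_add, ← Complex.exp_add]; push_cast; ring_nf
    rw [e1, e2, Complex.ofReal_sin, Complex.sin]
    push_cast
    ring
  simp_rw [hrw]
  rw [intervalIntegral.integral_sub ((intervalIntegrable_exp_mul_I _).const_mul _)
      ((intervalIntegrable_exp_mul_I _).const_mul _), intervalIntegral.integral_const_mul,
    intervalIntegral.integral_const_mul, integral_exp_mul_mul_I_eq_sinc,
    integral_exp_mul_mul_I_eq_sinc]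
  have h := congrArg (fun x : ℝ => (x : ℂ)) (sinc_sub_sinc_eq_sinCoeff hδ n)
  push_cast at h ⊢
  linear_combination -Complex.I * 2 * π * h

lemma neg_one_zpow_mul_exp (n : ℤ) :
    (-1 : ℂ) ^ n * Complex.exp (n * ((-π : ℝ) : ℂ) * Complex.I) = 1 := by
  have h : Complex.exp (n * ((-π : ℝ) : ℂ) * Complex.I) = (-1) ^ n := by
    rw [mul_assoc, Complex.exp_int_mul, Complex.ofReal_neg, neg_mul, Complex.exp_neg,
      Complex.exp_pi_mul_I]
    norm_num
  rw [h, ← mul_zpow]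
  simp

lemma hasSum_cosCoeff_one_sub_cos {δ : ℝ} (hδ : |δ| ≤ 1 / 4) :
    HasSum (cosCoeff δ) (1 - cos (π * δ)) := by
  have h := (hasSum_cosCoeff_s3 hδ (t := -π) ⟨le_rfl, by linarith [pi_pos]⟩).neg
  rw [← Complex.hasSum_ofReal]
  convert! h using 1
  · ext n
    linear_combination (-(cosCoeff δ n : ℂ)) * neg_one_zpow_mul_exp n
  · rw [mul_neg, cos_neg, mul_comm]; push_cast; ring

lemma hasSum_sinCoeff_sin {δ : ℝ} (hδ : |δ| ≤ 1 / 4) :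
    HasSum (sinCoeff δ) (sin (π * δ)) := by
  have h := (hasSum_sinCoeff_s3 hδ (t := -π) ⟨le_rfl, by linarith [pi_pos]⟩).mul_left (-Complex.I)
  rw [← Complex.hasSum_ofReal]
  convert! h using 1
  · ext n
    linear_combination (-(sinCoeff δ n : ℂ)) * neg_one_zpow_mul_exp n +
      (sinCoeff δ n : ℂ) * (-1) ^ n * Complex.exp (n * ((-π : ℝ) : ℂ) * Complex.I) * Complex.I_sq
  · have h1 : Complex.exp (((-π : ℝ) : ℂ) / 2 * Complex.I) = -Complex.I := by
      rw [← Complex.exp_neg_pi_div_two_mul_I]; push_cast; ring_nf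
    rw [h1, mul_neg δ, sin_neg, mul_comm π]
    push_cast
    linear_combination (Complex.sin (δ * π)) * Complex.I_sq

lemma sinc_antitone {x y : ℝ} (hx : 0 ≤ x) (hxy : x ≤ y) (hy : y ≤ π) : sinc y ≤ sinc x := by
  rcases hx.eq_or_lt with rfl | hx0
  · rw [sinc_zero]; exact sinc_le_one y
  have hy0 : 0 < y := hx0.trans_le hxy
  rw [sinc_of_ne_zero hx0.ne', sinc_of_ne_zero hy0.ne']
  have ha : 0 ≤ 1 - x / y := by rwa [sub_nonneg, div_le_one hy0]
  have hb : 0 ≤ x / y := by positivity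
  have h := strictConcaveOn_sin_Icc.concaveOn.2 ⟨le_rfl, pi_pos.le⟩ ⟨hy0.le, hy⟩ ha hb (by ring)
  simp only [smul_eq_mul, mul_zero, sin_zero, zero_add, div_mul_cancel₀ _ hy0.ne'] at h
  rw [le_div_iff₀ hx0]
  calc sin y / y * x = x / y * sin y := by ring
    _ ≤ sin x := h

lemma mul_cos_monotone {x y : ℝ} (hx : 0 ≤ x) (hxy : x ≤ y) (hy : y ≤ π / 4) :
    x * cos x ≤ y * cos y := by
  have hπ := pi_le_four
  have hdiff : cos x - cos y ≤ (y - x) * sin y := by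
    have h1 : sin ((x + y) / 2) ≤ sin y :=
      sin_le_sin_of_le_of_le_pi_div_two (by linarith) (by linarith) (by linarith)
    have h2 : sin ((y - x) / 2) ≤ (y - x) / 2 := sin_le (by linarith)
    have h3 : 0 ≤ sin ((y - x) / 2) := sin_nonneg_of_nonneg_of_le_pi (by linarith) (by linarith)
    have h4 : 0 ≤ sin y := sin_nonneg_of_nonneg_of_le_pi (by linarith) (by linarith)
    rw [cos_sub_cos, show (x - y) / 2 = -((y - x) / 2) by ring, sin_neg]
    nlinarith [mul_le_mul h1 h2 h3 h4]
  have hsc : sin y ≤ cos y := by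
    rw [← sin_pi_div_two_sub]
    exact sin_le_sin_of_le_of_le_pi_div_two (by linarith) (by linarith) (by linarith)
  have hs : 0 ≤ sin y := sin_nonneg_of_nonneg_of_le_pi (by linarith) (by linarith)
  have hx1 : x ≤ 1 := by linarith
  nlinarith [mul_le_mul_of_nonneg_left hdiff hx, mul_nonneg (sub_nonneg.mpr hxy)
    (show 0 ≤ cos y - x * sin y by nlinarith)]

lemma cosCoeff_abs (δ : ℝ) (n : ℤ) : cosCoeff |δ| n = cosCoeff δ n := by
  rcases abs_choice δ with h | h <;> rw [h]
  simp [cosCoeff]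

lemma abs_sinCoeff {δ : ℝ} (hδ : |δ| ≤ 1 / 4) (n : ℤ) : |sinCoeff δ n| = sinCoeff |δ| n := by
  have hπ := pi_pos
  have hc : 0 ≤ cos (π * δ) := by
    have := abs_le.mp hδ
    exact cos_nonneg_of_neg_pi_div_two_le_of_le (by nlinarith) (by nlinarith)
  have hd : 0 < ((n : ℝ) - 1 / 2) ^ 2 - δ ^ 2 := by
    linarith [sq_le_of_abs_le_quarter hδ, half_int_sq_ge n]
  have hca : cos (π * |δ|) = cos (π * δ) := by
    rw [← abs_of_pos hπ, ← abs_mul, cos_abs, abs_of_pos hπ]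
  rw [sinCoeff, sinCoeff, abs_div, abs_mul, abs_of_nonneg hc, hca, sq_abs,
    abs_of_pos (mul_pos hπ hd)]

lemma cosCoeff_nonneg {δ : ℝ} (h0 : 0 ≤ δ) (h1 : δ ≤ 1 / 4) (n : ℤ) : 0 ≤ cosCoeff δ n := by
  rw [cosCoeff]
  split_ifs with hn
  · linarith [sinc_le_one (π * δ)]
  · have hd : 0 ≤ (n : ℝ) ^ 2 - δ ^ 2 := by
      linarith [int_sq_div_le hn (abs_le.mpr ⟨by linarith, h1⟩), sq_nonneg (n : ℝ)]
    have hs : 0 ≤ sin (π * δ) :=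
      sin_nonneg_of_nonneg_of_le_pi (by positivity) (by nlinarith [pi_pos])
    have := pi_pos
    positivity

lemma abs_cosCoeff_le_s3 {δ α : ℝ} (hδ : |δ| ≤ α) (hα : α ≤ 1 / 4) (n : ℤ) :
    |cosCoeff δ n| ≤ cosCoeff α n := by
  have hπ := pi_pos
  have hπδ : 0 ≤ π * |δ| := by positivity
  have hle : π * |δ| ≤ π * α := by gcongr
  have hαπ : π * α ≤ π / 4 := by nlinarith
  rw [← cosCoeff_abs, abs_of_nonneg (cosCoeff_nonneg (abs_nonneg δ) (hδ.trans hα) n)]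
  have h0 := abs_nonneg δ
  rw [cosCoeff, cosCoeff]
  split_ifs with hn
  · linarith [sinc_antitone hπδ hle (by linarith)]
  · have hs : sin (π * |δ|) ≤ sin (π * α) :=
      sin_le_sin_of_le_of_le_pi_div_two (by linarith) (by linarith) hle
    have hs0 : 0 ≤ sin (π * |δ|) := sin_nonneg_of_nonneg_of_le_pi hπδ (by linarith)
    have hd : 0 < (n : ℝ) ^ 2 - α ^ 2 := by
      linarith [sq_le_of_abs_le_quarter (abs_le.mpr ⟨by linarith, hα⟩),
        sq_ge_one_of_int_ne_zero hn]
    have hα0 := h0.trans hδ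
    gcongr
    exact mul_nonneg hα0 (hs0.trans hs)

lemma sinCoeff_nonneg {δ : ℝ} (h0 : 0 ≤ δ) (h1 : δ ≤ 1 / 4) (n : ℤ) : 0 ≤ sinCoeff δ n := by
  have h := abs_sinCoeff (abs_le.mpr ⟨by linarith, h1⟩) n
  rw [abs_of_nonneg h0] at h
  exact h ▸ abs_nonneg _

lemma abs_sinCoeff_le_s3 {δ α : ℝ} (hδ : |δ| ≤ α) (hα : α ≤ 1 / 4) (n : ℤ) :
    |sinCoeff δ n| ≤ sinCoeff α n := by
  have hπ := pi_pos
  rw [abs_sinCoeff (hδ.trans hα)]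
  have h0 := abs_nonneg δ
  have hα0 := h0.trans hδ
  have hm := mul_cos_monotone (x := π * |δ|) (y := π * α) (by positivity) (by gcongr)
    (by nlinarith)
  have hm' : |δ| * cos (π * |δ|) ≤ α * cos (π * α) := by
    rw [mul_assoc, mul_assoc] at hm
    exact le_of_mul_le_mul_left hm hπ
  have hd : 0 < ((n : ℝ) - 1 / 2) ^ 2 - α ^ 2 := by
    linarith [sq_le_of_abs_le_quarter (abs_le.mpr ⟨by linarith, hα⟩), half_int_sq_ge n]
  have hc : 0 ≤ cos (π * α) :=
    cos_nonneg_of_neg_pi_div_two_le_of_le (by nlinarith) (by nlinarith)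
  have hαc := mul_nonneg hα0 hc
  rw [sinCoeff, sinCoeff]
  gcongr

/-- The discrete Fourier transform matrix with indices centred at `N`. -/
noncomputable def centredDFT (N : ℕ) : Matrix (Fin (2 * N + 1)) (Fin (2 * N + 1)) ℂ :=
  fun j k => Complex.exp (-Complex.I *
    (((((j : ℕ) : ℝ) - N) * (2 * π / (2 * N + 1)) : ℝ) : ℂ) * (((k : ℕ) : ℂ) - N))

lemma centredDFT_conjTranspose_mul_self (N : ℕ) :
    (centredDFT N).conjTranspose * centredDFT N = ((√(2 * N + 1) ^ 2 : ℝ) : ℂ) • 1 := by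
  rw [sq_sqrt (by positivity)]
  ext k l
  set ζ : ℂ := Complex.exp (2 * π * Complex.I / ((2 * N + 1 : ℕ) : ℂ)) with hζ
  have hprim : IsPrimitiveRoot ζ (2 * N + 1) := Complex.isPrimitiveRoot_exp _ (by lia)
  have hNne : (2 * N + 1 : ℂ) ≠ 0 := by exact_mod_cast (by lia : 2 * N + 1 ≠ 0)
  have hterm : ∀ j : Fin (2 * N + 1), star (centredDFT N j k) * centredDFT N j l =
      (ζ ^ (((k : ℕ) : ℤ) - (l : ℕ))) ^ (-(N : ℤ)) * (ζ ^ (((k : ℕ) : ℤ) - (l : ℕ))) ^ (j : ℕ) := by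
    intro j
    rw [← zpow_natCast, ← zpow_mul, ← zpow_mul, hζ, ← Complex.exp_int_mul, ← Complex.exp_int_mul,
      centredDFT, centredDFT, Complex.star_def, ← Complex.exp_conj, ← Complex.exp_add,
      ← Complex.exp_add]
    congr 1
    simp only [map_mul, map_neg, map_sub, Complex.conj_I, Complex.conj_ofReal, map_natCast]
    push_cast
    field_simp
    ring
  rw [Matrix.mul_apply]
  simp only [Matrix.conjTranspose_apply, hterm, Matrix.smul_apply, smul_eq_mul]
  rw [← Finset.mul_sum, Fin.sum_univ_eq_sum_range (fun j => (ζ ^ (((k : ℕ) : ℤ) - (l : ℕ))) ^ j)]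
  by_cases hkl : k = l
  · subst hkl
    simp
  · have hne : ζ ^ (((k : ℕ) : ℤ) - (l : ℕ)) ≠ 1 := by
      rw [Ne, hprim.zpow_eq_one_iff_dvd]
      intro hdvd
      have h0 : ((k : ℕ) : ℤ) - (l : ℕ) = 0 :=
        Int.eq_zero_of_abs_lt_dvd hdvd (by have := k.2; have := l.2; rw [abs_lt]; constructor <;> omega)
      exact hkl (Fin.ext (by omega))
    have hpow : (ζ ^ (((k : ℕ) : ℤ) - (l : ℕ))) ^ (2 * N + 1) = 1 := by
      rw [← zpow_natCast, zpow_comm, zpow_natCast, hprim.pow_eq_one, one_zpow]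
    rw [geom_sum_eq hne, hpow, Matrix.one_apply_ne hkl]
    simp

/-- the spectral condition number of the NUDFT matrix at α-perturbed nodes
(α < 1/4) is bounded independently of N. -/
theorem nudft_condition_number_bound (N : ℕ) (hN : 0 < N) (α : ℝ) (hα0 : 0 ≤ α) (hα : α < 1/4)
    (xt : Fin (2*N+1) → ℝ)
    (hxt : ∀ j, |xt j - (((j : ℕ) : ℝ) - (N : ℝ)) * (2*π/(2*N+1))| ≤ α * (2*π/(2*N+1)))
    (Ftil : Matrix (Fin (2*N+1)) (Fin (2*N+1)) ℂ)
    (hFtil : ∀ j k, Ftil j k =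
      Complex.exp (-Complex.I * (xt j : ℂ) * (((k : ℕ) : ℂ) - (N : ℂ)))) :
    IsUnit Ftil ∧
    ‖Matrix.toEuclideanCLM (𝕜 := ℂ) Ftil‖ * ‖Matrix.toEuclideanCLM (𝕜 := ℂ) Ftil⁻¹‖ ≤
      (1 + (1 - Real.cos (π*α) + Real.sin (π*α))) /
        (1 - (1 - Real.cos (π*α) + Real.sin (π*α))) := by
  have hπ := pi_pos
  set h : ℝ := 2 * π / (2 * N + 1) with hh
  have hhpos : 0 < h := by positivity
  have hdft := norm_toEuclideanCLM_of_conjTranspose_mul_self (sqrt_nonneg _)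
    (centredDFT_conjTranspose_mul_self N)
  have hspos : 0 < √(2 * (N : ℝ) + 1) := sqrt_pos.mpr (by positivity)
  -- the relative node perturbations and the frequencies rescaled to `(-π, π)`
  let δ : Fin (2 * N + 1) → ℝ := fun j => (xt j - (((j : ℕ) : ℝ) - N) * h) / h
  let t : Fin (2 * N + 1) → ℝ := fun k => (((k : ℕ) : ℝ) - N) * h
  have hδ : ∀ j, |δ j| ≤ α := fun j => by
    rw [abs_div, abs_of_pos hhpos, div_le_iff₀ hhpos]
    exact hxt j
  have hδ4 : ∀ j, |δ j| ≤ 1 / 4 := fun j => (hδ j).trans hα.le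
  have hα4 : |α| ≤ 1 / 4 := by rw [abs_of_nonneg hα0]; exact hα.le
  have ht : ∀ k, t k ∈ Set.Ico (-π) π := fun k => by
    have hNh : (2 * (N : ℝ) + 1) * h = 2 * π := by rw [hh]; field_simp
    have hk : ((k : ℕ) : ℝ) ≤ 2 * N := by exact_mod_cast Nat.lt_succ_iff.mp k.2
    have hk0 : (0 : ℝ) ≤ (k : ℕ) := by positivity
    constructor <;> simp only [t] <;> nlinarith
  have hexp : ∀ x y : ℝ, ‖Complex.exp (x * y * Complex.I)‖ = 1 := fun x y => by
    rw [← Complex.ofReal_mul]; exact Complex.norm_exp_ofReal_mul_I _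
  let P : Matrix (Fin (2 * N + 1)) (Fin (2 * N + 1)) ℂ :=
    fun j k => centredDFT N j k * ((Real.cos (δ j * t k) : ℂ) - 1)
  let Q : Matrix (Fin (2 * N + 1)) (Fin (2 * N + 1)) ℂ :=
    fun j k => centredDFT N j k * (-Complex.I * (Real.sin (δ j * t k) : ℂ))
  have hsplit : Ftil - centredDFT N = P + Q := by
    ext j k
    have hfac : Ftil j k = centredDFT N j k * Complex.exp (-(δ j * t k : ℝ) * Complex.I) := by
      have hx : xt j = (((j : ℕ) : ℝ) - N) * h + δ j * h := by
        simp only [δ]; field_simp; ring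
      rw [hFtil, centredDFT, ← hh, hx, ← Complex.exp_add]
      simp only [t]
      push_cast
      ring_nf
    rw [Matrix.sub_apply, Matrix.add_apply, hfac, ← Complex.ofReal_neg, Complex.exp_mul_I,
      ← Complex.ofReal_cos, ← Complex.ofReal_sin, cos_neg, sin_neg]
    simp only [P, Q]
    push_cast
    ring
  have hP : ∀ v, ‖Matrix.toEuclideanCLM (𝕜 := ℂ) P v‖ ≤
      (1 - cos (π * α)) * √(2 * N + 1) * ‖v‖ := by
    refine norm_toEuclideanCLM_schur_le hspos.le (fun v => (hdft v).le)
      (fun n j => -1 * (-1) ^ n * (cosCoeff (δ j) n : ℂ))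
      (fun n k => Complex.exp (n * t k * Complex.I)) (cosCoeff α) (fun n j => ?_) (fun n k => ?_)
      (cosCoeff_nonneg hα0 hα.le) (hasSum_cosCoeff_one_sub_cos hα4) (fun j k => ?_)
    · simpa using abs_cosCoeff_le_s3 (hδ j) hα.le n
    · exact_mod_cast (hexp n (t k)).le
    · convert! (hasSum_cosCoeff_s3 (hδ4 j) (ht k)).mul_left (centredDFT N j k) using 2
      ring
  have hQ : ∀ v, ‖Matrix.toEuclideanCLM (𝕜 := ℂ) Q v‖ ≤
      sin (π * α) * √(2 * N + 1) * ‖v‖ := by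
    refine norm_toEuclideanCLM_schur_le hspos.le (fun v => (hdft v).le)
      (fun n j => (-1) ^ n * (sinCoeff (δ j) n : ℂ))
      (fun n k => Complex.exp (((n - 1 / 2 : ℝ) : ℂ) * t k * Complex.I)) (sinCoeff α)
      (fun n j => ?_) (fun n k => ?_)
      (sinCoeff_nonneg hα0 hα.le) (hasSum_sinCoeff_sin hα4) (fun j k => ?_)
    · simpa using abs_sinCoeff_le_s3 (hδ j) hα.le n
    · exact (hexp _ (t k)).le
    · convert! (hasSum_sinCoeff_s3 (hδ4 j) (ht k)).mul_left
        (centredDFT N j k * (-Complex.I * Complex.exp (-(t k / 2 * Complex.I)))) using 1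
      · ext n
        have he : Complex.exp (((n - 1 / 2 : ℝ) : ℂ) * t k * Complex.I) =
            Complex.exp (-(t k / 2 * Complex.I)) * Complex.exp (n * t k * Complex.I) := by
          rw [← Complex.exp_add]; push_cast; ring_nf
        rw [he]
        linear_combination (-1) ^ n * (sinCoeff (δ j) n : ℂ) * centredDFT N j k *
          Complex.exp (-(t k / 2 * Complex.I)) * Complex.exp (n * t k * Complex.I) * Complex.I_sq
      · have he : Complex.exp (-(t k / 2 * Complex.I)) * Complex.exp (t k / 2 * Complex.I) = 1 := by
          rw [← Complex.exp_add, neg_add_cancel, Complex.exp_zero]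
        simp only [Q]
        linear_combination centredDFT N j k * Complex.I * Real.sin (δ j * t k) * he
  have hsc : sin (π * α) < cos (π * α) := by
    rw [← sin_pi_div_two_sub]
    exact sin_lt_sin_of_lt_of_le_pi_div_two (by nlinarith) (by nlinarith) (by nlinarith)
  have hs0 : 0 ≤ sin (π * α) := sin_nonneg_of_nonneg_of_le_pi (by positivity) (by nlinarith)
  refine condition_number_le_of_near_isometry hspos (by linarith [cos_le_one (π * α)])
    (by linarith) hdft fun v => ?_
  rw [hsplit, map_add, add_apply]
  refine (norm_add_le _ _).trans ?_
  linarith [hP v, hQ v]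
end
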